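/- Let α, β, γ ∈ ℂ with none of α, β, γ a nonpositive integer, let δ, w ∈ ℂ, and let k ∈ (0,1). Define f_{m,n} and c_n as in the context and set ε := α + β + 1 − γ − δ. Then the power series F(z) := Σ_{n=0}^{∞} c_n z^n converges for every complex z with |z| < 1, F(0) = 1, and F satisfies Heun's differential equation on the punctured disk: for every z with 0 < |z| < 1, F''(z) + ( γ/z − δ/(1−z) − εk²/(1−k²z) )·F'(z) + ( (w − k²αβ(1−z)) / (z(1−z)(1−k²z)) )·F(z) = 0. -/

import Mathlib

/-- The Pochhammer symbol `(x)_n = x(x+1)⋯(x+n-1)`. -/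
noncomputable def poch (x : ℂ) (n : ℕ) : ℂ := ∏ i ∈ Finset.range n, (x + (i : ℂ))

/-- The index set of tuples `(ℓ_1, j_1, …, ℓ_m, j_m)` with
`0 ≤ ℓ_1 ≤ j_1 < ℓ_2 ≤ j_2 < ⋯ < ℓ_m ≤ j_m < n`, encoded as pairs of functions
`(ℓ, j) : (Fin m → Fin n) × (Fin m → Fin n)`. -/
def heunIdx (m n : ℕ) : Finset ((Fin m → Fin n) × (Fin m → Fin n)) :=
  Finset.univ.filter fun p =>
    (∀ s : Fin m, (p.1 s : ℕ) ≤ (p.2 s : ℕ)) ∧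
    (∀ s t : Fin m, (s : ℕ) + 1 = (t : ℕ) → (p.2 s : ℕ) < (p.1 t : ℕ))

/-- The coefficients `f_{m,n}`: `f_{0,n} = k^{2n}`; for `1 ≤ m ≤ n`,
`f_{m,n} = (-1)^m k^{2n-2m} Σ ∏_{s=1}^m [j_s!(γ)_{j_s}(α)_{ℓ_s}(β)_{ℓ_s} /
(ℓ_s!(γ)_{ℓ_s}(α)_{j_s+1}(β)_{j_s+1})] k^{-2(j_s-ℓ_s)} (w - (1-k²)δℓ_s)`,
the sum running over `heunIdx m n`; and `f_{m,n} = 0` for `m < 0` or `m > n`. -/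
noncomputable def heunf (k : ℝ) (α β γ δ w : ℂ) (m : ℤ) (n : ℕ) : ℂ :=
  if m = 0 then (k : ℂ) ^ (2 * n)
  else if m < 0 ∨ (n : ℤ) < m then 0
  else (-1 : ℂ) ^ m.toNat * (k : ℂ) ^ (2 * (n : ℤ) - 2 * m) *
    ∑ p ∈ heunIdx m.toNat n, ∏ s : Fin m.toNat,
      ((Nat.factorial (p.2 s : ℕ) : ℂ) * poch γ (p.2 s : ℕ) * poch α (p.1 s : ℕ) *
          poch β (p.1 s : ℕ)) /
        ((Nat.factorial (p.1 s : ℕ) : ℂ) * poch γ (p.1 s : ℕ) * poch α ((p.2 s : ℕ) + 1) *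
          poch β ((p.2 s : ℕ) + 1)) *
      (k : ℂ) ^ (-(2 : ℤ) * (((p.2 s : ℕ) : ℤ) - ((p.1 s : ℕ) : ℤ))) *
      (w - (1 - (k : ℂ) ^ 2) * δ * ((p.1 s : ℕ) : ℂ))

/-- The Taylor coefficients `c_n = ((α)_n (β)_n / (n! (γ)_n)) Σ_{m=0}^n f_{m,n}`
of the local Heun solution. -/
noncomputable def heunc (k : ℝ) (α β γ δ w : ℂ) (n : ℕ) : ℂ :=
  poch α n * poch β n / ((Nat.factorial n : ℂ) * poch γ n) *
    ∑ m ∈ Finset.range (n + 1), heunf k α β γ δ w (m : ℤ) n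


section HeunComb

/-- index set with natural number values -/
def heunS (m n : ℕ) : Finset ((Fin m → ℕ) × (Fin m → ℕ)) :=
  ((Fintype.piFinset fun _ => Finset.range n) ×ˢ (Fintype.piFinset fun _ => Finset.range n)).filter
    fun p => (∀ s : Fin m, p.1 s ≤ p.2 s) ∧
      (∀ s t : Fin m, (s : ℕ) + 1 = (t : ℕ) → p.2 s < p.1 t)

lemma mem_heunS {m n : ℕ} {p : (Fin m → ℕ) × (Fin m → ℕ)} :
    p ∈ heunS m n ↔ (∀ s, p.1 s < n) ∧ (∀ s, p.2 s < n) ∧ (∀ s : Fin m, p.1 s ≤ p.2 s) ∧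
      (∀ s t : Fin m, (s : ℕ) + 1 = (t : ℕ) → p.2 s < p.1 t) := by
  simp [heunS, and_assoc]

lemma heunS_chain {m n : ℕ} {p : (Fin (m+1) → ℕ) × (Fin (m+1) → ℕ)} (hp : p ∈ heunS (m+1) n)
    (s : Fin m) : p.2 s.castSucc < p.1 (Fin.last m) := by
  obtain ⟨-, -, h1, h2⟩ := mem_heunS.1 hp
  have hmono : StrictMono p.2 := by
    rw [Fin.strictMono_iff_lt_succ]
    intro i
    exact lt_of_lt_of_le (h2 _ _ (by simp)) (h1 _)
  have hm : m ≠ 0 := by rintro rfl; exact s.elim0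
  have h3 : p.2 (⟨m - 1, by omega⟩ : Fin (m+1)) < p.1 (Fin.last m) :=
    h2 _ _ (by simp; omega)
  refine lt_of_le_of_lt (hmono.monotone ?_) h3
  rw [Fin.le_def]; simp; omega

lemma heunIdx_sum (T : ℕ → ℕ → ℂ) (m n : ℕ) :
    ∑ p ∈ heunIdx m n, ∏ s : Fin m, T (p.1 s : ℕ) (p.2 s : ℕ)
      = ∑ p ∈ heunS m n, ∏ s : Fin m, T (p.1 s) (p.2 s) := by
  refine Finset.sum_bij (fun p _ => (fun s => (p.1 s : ℕ), fun s => (p.2 s : ℕ))) ?_ ?_ ?_ ?_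
  · intro p hp
    rw [mem_heunS]
    simp only [heunIdx, Finset.mem_filter, Finset.mem_univ, true_and] at hp
    exact ⟨fun s => (p.1 s).2, fun s => (p.2 s).2, hp.1, hp.2⟩
  · rintro ⟨a, b⟩ _ ⟨c, d⟩ _ h
    simp only [Prod.mk.injEq] at h
    ext s
    · exact congrFun h.1 s
    · exact congrFun h.2 s
  · intro p hp
    obtain ⟨h1, h2, h3, h4⟩ := mem_heunS.1 hp
    refine ⟨(fun s => ⟨p.1 s, h1 s⟩, fun s => ⟨p.2 s, h2 s⟩), ?_, rfl⟩
    simp only [heunIdx, Finset.mem_filter, Finset.mem_univ, true_and]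
    exact ⟨h3, h4⟩
  · intro p hp; rfl

/-- the sum over the index set -/
noncomputable def heunG (T : ℕ → ℕ → ℂ) (m n : ℕ) : ℂ :=
  ∑ p ∈ heunS m n, ∏ s : Fin m, T (p.1 s) (p.2 s)

lemma heunG_zero (T : ℕ → ℕ → ℂ) (n : ℕ) : heunG T 0 n = 1 := by
  have : heunS 0 n = Finset.univ := by
    ext p; simp [mem_heunS]
  simp [heunG, this]

lemma heunG_succ (T : ℕ → ℕ → ℂ) (m n : ℕ) :
    heunG T (m+1) n = ∑ j ∈ Finset.range n, ∑ l ∈ Finset.range (j+1), T l j * heunG T m l := by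
  unfold heunG
  simp only [Finset.mul_sum, Finset.sum_sigma']
  refine Finset.sum_bij' (fun p _ => ⟨p.2 (Fin.last m), p.1 (Fin.last m),
    (fun s : Fin m => p.1 s.castSucc, fun s : Fin m => p.2 s.castSucc)⟩)
    (fun q _ => (Fin.snoc (α := fun _ => ℕ) q.2.2.1 q.2.1,
      Fin.snoc (α := fun _ => ℕ) q.2.2.2 q.1))
    ?_ ?_ ?_ ?_ ?_
  · intro p hp
    have hc := heunS_chain hp
    obtain ⟨h1, h2, h3, h4⟩ := mem_heunS.1 hp
    simp only [Finset.mem_sigma, Finset.mem_range, mem_heunS]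
    refine ⟨h2 _, Nat.lt_succ_of_le (h3 _), fun s => lt_of_le_of_lt (h3 _) (hc s), hc,
      fun s => h3 _, fun s t hst => h4 _ _ (by simpa using hst)⟩
  · rintro ⟨j, l, a, b⟩ hq
    simp only [Finset.mem_sigma, Finset.mem_range, mem_heunS] at hq
    obtain ⟨hj, hl, h1, h2, h3, h4⟩ := hq
    rw [mem_heunS]
    refine ⟨?_, ?_, ?_, ?_⟩
    · intro s
      refine Fin.lastCases ?_ (fun s => ?_) s
      · simp; omega
      · have := h1 s; simp; omega
    · intro s
      refine Fin.lastCases ?_ (fun s => ?_) s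
      · simp; omega
      · have := h2 s; simp; omega
    · intro s
      refine Fin.lastCases ?_ (fun s => ?_) s
      · simp; omega
      · have := h3 s; simpa using this
    · intro s t
      refine Fin.lastCases ?_ (fun s => ?_) s
      · intro h; have := t.2; simp at h; omega
      · refine Fin.lastCases ?_ (fun t => ?_) t
        · intro _; simpa using h2 s
        · intro h; simpa using h4 s t (by simpa using h)
  · rintro ⟨a, b⟩ _
    simp only [Prod.mk.injEq]
    exact ⟨Fin.snoc_init_self (α := fun _ => ℕ) a, Fin.snoc_init_self (α := fun _ => ℕ) b⟩
  · rintro ⟨j, l, a, b⟩ _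
    simp
  · intro p hp
    rw [Fin.prod_univ_castSucc, mul_comm]

lemma heunG_eq_zero (T : ℕ → ℕ → ℂ) (m n : ℕ) (h : n < m) : heunG T m n = 0 := by
  induction m generalizing n with
  | zero => omega
  | succ m ih =>
    rw [heunG_succ]
    refine Finset.sum_eq_zero fun j hj => Finset.sum_eq_zero fun l hl => ?_
    rw [Finset.mem_range] at hj hl
    rw [ih l (by omega), mul_zero]

/-- the bracket without the power of `k` -/
noncomputable def heunK (k : ℝ) (α β γ δ w : ℂ) (l j : ℕ) : ℂ :=
  ((Nat.factorial j : ℂ) * poch γ j * poch α l * poch β l) /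
        ((Nat.factorial l : ℂ) * poch γ l * poch α (j + 1) * poch β (j + 1)) *
      (w - (1 - (k : ℂ) ^ 2) * δ * (l : ℂ))

/-- the bracket -/
noncomputable def heunT (k : ℝ) (α β γ δ w : ℂ) (l j : ℕ) : ℂ :=
  ((Nat.factorial j : ℂ) * poch γ j * poch α l * poch β l) /
        ((Nat.factorial l : ℂ) * poch γ l * poch α (j + 1) * poch β (j + 1)) *
      (k : ℂ) ^ (-(2 : ℤ) * ((j : ℤ) - (l : ℤ))) *
      (w - (1 - (k : ℂ) ^ 2) * δ * (l : ℂ))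

lemma heunf_eq (k : ℝ) (α β γ δ w : ℂ) (m n : ℕ) :
    heunf k α β γ δ w (m : ℤ) n =
      (-1 : ℂ) ^ m * (k : ℂ) ^ (2 * (n : ℤ) - 2 * m) * heunG (heunT k α β γ δ w) m n := by
  unfold heunf
  rcases Nat.eq_zero_or_pos m with rfl | hm
  · simp [heunG_zero]
    norm_cast
  · rw [if_neg (by omega)]
    by_cases h : n < m
    · rw [if_pos (by omega), heunG_eq_zero _ _ _ h, mul_zero]
    · rw [if_neg (by omega), heunG, ← heunIdx_sum]
      rfl

lemma heunf_zero_succ (k : ℝ) (α β γ δ w : ℂ) (n : ℕ) :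
    heunf k α β γ δ w ((0 : ℕ) : ℤ) (n+1) = (k:ℂ)^2 * heunf k α β γ δ w ((0:ℕ) : ℤ) n := by
  simp [heunf]; ring

lemma heunf_succ (k : ℝ) (hk : 0 < k) (α β γ δ w : ℂ) (m n : ℕ) :
    heunf k α β γ δ w ((m + 1 : ℕ) : ℤ) (n+1) =
      (k:ℂ)^2 * heunf k α β γ δ w ((m + 1 : ℕ) : ℤ) n
      - ∑ l ∈ Finset.range (n+1), heunK k α β γ δ w l n * heunf k α β γ δ w (m : ℤ) l := by
  have hk' : (k : ℂ) ≠ 0 := by exact_mod_cast hk.ne'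
  have hG : heunG (heunT k α β γ δ w) (m+1) (n+1) = heunG (heunT k α β γ δ w) (m+1) n +
      ∑ l ∈ Finset.range (n+1), heunT k α β γ δ w l n * heunG (heunT k α β γ δ w) m l := by
    rw [heunG_succ, Finset.sum_range_succ, ← heunG_succ]
  simp only [heunf_eq]
  rw [hG, mul_add, Finset.mul_sum, sub_eq_add_neg (_ * (_ * _) : ℂ), ← Finset.sum_neg_distrib]
  congr 1
  · have : (k:ℂ) ^ (2 * ((n + 1 : ℕ) : ℤ) - 2 * ((m+1 : ℕ) : ℤ)) =
       (k:ℂ)^2 * (k:ℂ) ^ (2 * (n : ℤ) - 2 * ((m+1 : ℕ) : ℤ)) := by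
      rw [← zpow_natCast, ← zpow_add₀ hk']; congr 1; push_cast; ring
    rw [this]; ring
  · refine Finset.sum_congr rfl fun l _ => ?_
    have : (k:ℂ) ^ (2 * (l : ℤ) - 2 * (m : ℤ)) =
       (k:ℂ) ^ (2 * ((n + 1 : ℕ) : ℤ) - 2 * ((m+1 : ℕ) : ℤ)) *
        (k : ℂ) ^ (-(2 : ℤ) * ((n : ℤ) - (l : ℤ))) := by
      rw [← zpow_add₀ hk']; congr 1; push_cast; ring
    rw [this, heunK, heunT, pow_succ]; ring

/-- `g_n = ∑ f_{m,n}` -/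
noncomputable def heung (k : ℝ) (α β γ δ w : ℂ) (n : ℕ) : ℂ :=
  ∑ m ∈ Finset.range (n + 1), heunf k α β γ δ w (m : ℤ) n

lemma heunc_eq (k : ℝ) (α β γ δ w : ℂ) (n : ℕ) : heunc k α β γ δ w n =
    poch α n * poch β n / ((Nat.factorial n : ℂ) * poch γ n) * heung k α β γ δ w n := rfl

lemma heung_eq (k : ℝ) (α β γ δ w : ℂ) (n N : ℕ) (h : n < N) :
    ∑ m ∈ Finset.range N, heunf k α β γ δ w (m : ℤ) n = heung k α β γ δ w n := by
  unfold heung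
  symm
  refine Finset.sum_subset (by intro x; simp; omega) ?_
  intro m _ hm
  rw [heunf_eq, heunG_eq_zero _ _ _ (by simpa using hm), mul_zero]

lemma heung_succ (k : ℝ) (hk : 0 < k) (α β γ δ w : ℂ) (n : ℕ) :
    heung k α β γ δ w (n+1) = (k:ℂ)^2 * heung k α β γ δ w n
      - ∑ l ∈ Finset.range (n+1), heunK k α β γ δ w l n * heung k α β γ δ w l := by
  rw [← heung_eq k α β γ δ w n (n+2) (by omega), heung, Finset.sum_range_succ',
    Finset.sum_range_succ' _ (n+1)]
  simp only [heunf_succ k hk, heunf_zero_succ, Finset.sum_sub_distrib]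
  rw [Finset.sum_comm (s := Finset.range (n+1)) (t := Finset.range (n+1)), ← Finset.mul_sum]
  have : ∀ l ∈ Finset.range (n+1),
      ∑ m ∈ Finset.range (n+1), heunK k α β γ δ w l n * heunf k α β γ δ w (m:ℤ) l
      = heunK k α β γ δ w l n * heung k α β γ δ w l := by
    intro l hl
    rw [← Finset.mul_sum, heung_eq _ _ _ _ _ _ _ _ (by simpa using hl)]
  rw [Finset.sum_congr rfl this]
  ring

lemma poch_succ (x : ℂ) (n : ℕ) : poch x (n+1) = poch x n * (x + n) := by
  simp [poch, Finset.prod_range_succ]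

lemma add_ne_of {x : ℂ} (hx : ∀ j : ℕ, x ≠ -(j : ℂ)) (n : ℕ) : x + n ≠ 0 :=
  fun h => hx n (eq_neg_of_add_eq_zero_left h)

lemma poch_ne {x : ℂ} (hx : ∀ j : ℕ, x ≠ -(j : ℂ)) (n : ℕ) : poch x n ≠ 0 :=
  Finset.prod_ne_zero_iff.2 fun i _ => add_ne_of hx i

lemma heunK_diag (k : ℝ) (α β γ δ w : ℂ)
    (hα : ∀ j : ℕ, α ≠ -(j : ℂ)) (hβ : ∀ j : ℕ, β ≠ -(j : ℂ))
    (hγ : ∀ j : ℕ, γ ≠ -(j : ℂ)) (n : ℕ) : heunK k α β γ δ w n n =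
    (w - (1 - (k : ℂ) ^ 2) * δ * (n : ℂ)) / ((α + n) * (β + n)) := by
  have h1 := poch_ne hα n
  have h2 := poch_ne hβ n
  have h3 := poch_ne hγ n
  have h4 := add_ne_of hα n
  have h5 := add_ne_of hβ n
  have h6 : (n.factorial : ℂ) ≠ 0 := by exact_mod_cast n.factorial_ne_zero
  rw [heunK, poch_succ, poch_succ]
  field_simp

lemma heunK_succ (k : ℝ) (α β γ δ w : ℂ)
    (hα : ∀ j : ℕ, α ≠ -(j : ℂ)) (hβ : ∀ j : ℕ, β ≠ -(j : ℂ))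
    (hγ : ∀ j : ℕ, γ ≠ -(j : ℂ)) (l n : ℕ) : (α + (n+1:ℕ)) * (β + (n+1:ℕ)) * heunK k α β γ δ w l (n+1) =
    (n + 1) * (γ + n) * heunK k α β γ δ w l n := by
  have h1 := poch_ne hα (n+1)
  have h2 := poch_ne hβ (n+1)
  have h3 := poch_ne hγ l
  have h4 := add_ne_of hα (n+1)
  have h5 := add_ne_of hβ (n+1)
  have h6 : (l.factorial : ℂ) ≠ 0 := by exact_mod_cast l.factorial_ne_zero
  rw [heunK, heunK, poch_succ α (n+1), poch_succ β (n+1), poch_succ γ n, Nat.factorial_succ]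
  push_cast at *
  field_simp

lemma heung_rec0 (k : ℝ) (hk : 0 < k) (α β γ δ w : ℂ)
    (hα : ∀ j : ℕ, α ≠ -(j : ℂ)) (hβ : ∀ j : ℕ, β ≠ -(j : ℂ))
    (hγ : ∀ j : ℕ, γ ≠ -(j : ℂ)) : α * β * (heung k α β γ δ w 1 - (k:ℂ)^2 * heung k α β γ δ w 0) =
    - w * heung k α β γ δ w 0 := by
  have h4 := add_ne_of hα 0
  have h5 := add_ne_of hβ 0
  rw [heung_succ k hk]
  simp [heunK_diag k α β γ δ w hα hβ hγ] at *
  field_simp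

lemma heung_rec (k : ℝ) (hk : 0 < k) (α β γ δ w : ℂ)
    (hα : ∀ j : ℕ, α ≠ -(j : ℂ)) (hβ : ∀ j : ℕ, β ≠ -(j : ℂ))
    (hγ : ∀ j : ℕ, γ ≠ -(j : ℂ)) (n : ℕ) : (α + (n+1:ℕ)) * (β + (n+1:ℕ)) *
      (heung k α β γ δ w (n+2) - (k:ℂ)^2 * heung k α β γ δ w (n+1)) =
    (n + 1) * (γ + n) * (heung k α β γ δ w (n+1) - (k:ℂ)^2 * heung k α β γ δ w n)
    - (w - (1 - (k : ℂ) ^ 2) * δ * ((n+1:ℕ) : ℂ)) * heung k α β γ δ w (n+1) := by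
  have h4 := add_ne_of hα (n+1)
  have h5 := add_ne_of hβ (n+1)
  have e1 : ∀ m, heung k α β γ δ w (m+1) - (k:ℂ)^2 * heung k α β γ δ w m =
    - ∑ l ∈ Finset.range (m+1), heunK k α β γ δ w l m * heung k α β γ δ w l := by
    intro m; rw [heung_succ k hk]; ring
  rw [e1, e1, Finset.sum_range_succ _ (n+1), heunK_diag k α β γ δ w hα hβ hγ, mul_neg, mul_neg,
    mul_add, Finset.mul_sum, Finset.mul_sum]
  have : ∀ l ∈ Finset.range (n+1), (α + (n+1:ℕ)) * (β + (n+1:ℕ)) *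
      (heunK k α β γ δ w l (n+1) * heung k α β γ δ w l) =
      (n + 1) * (γ + n) * (heunK k α β γ δ w l n * heung k α β γ δ w l) := by
    intro l _
    rw [← mul_assoc, heunK_succ k α β γ δ w hα hβ hγ]; ring
  rw [Finset.sum_congr rfl this]
  field_simp
  ring

lemma heunA_succ (α β γ : ℂ) (hγ : ∀ j : ℕ, γ ≠ -(j : ℂ)) (n : ℕ) (g : ℂ) :
    (n + 1) * (γ + n) * (poch α (n+1) * poch β (n+1) / (((n+1).factorial : ℂ) * poch γ (n+1)) * g) =
    poch α n * poch β n / ((n.factorial : ℂ) * poch γ n) * ((α + n) * (β + n) * g) := by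
  have h3 := poch_ne hγ n
  have h4 := add_ne_of hγ n
  have h6 : (n.factorial : ℂ) ≠ 0 := by exact_mod_cast n.factorial_ne_zero
  have h7 : (n + 1 : ℂ) ≠ 0 := by exact_mod_cast n.succ_ne_zero
  rw [poch_succ, poch_succ, poch_succ, Nat.factorial_succ]
  push_cast
  field_simp

lemma heunc_rec0 (k : ℝ) (hk : 0 < k) (α β γ δ w : ℂ)
    (hα : ∀ j : ℕ, α ≠ -(j : ℂ)) (hβ : ∀ j : ℕ, β ≠ -(j : ℂ))
    (hγ : ∀ j : ℕ, γ ≠ -(j : ℂ)) : γ * heunc k α β γ δ w 1 + (w - (k:ℂ)^2 * α * β) * heunc k α β γ δ w 0 = 0 := by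
  have h := heunA_succ α β γ hγ 0 (heung k α β γ δ w 1)
  have h0 := heung_rec0 k hk α β γ δ w hα hβ hγ
  simp only [heunc_eq] at *
  simp [poch] at *
  linear_combination h + h0

lemma heunc_rec (k : ℝ) (hk : 0 < k) (α β γ δ w : ℂ)
    (hα : ∀ j : ℕ, α ≠ -(j : ℂ)) (hβ : ∀ j : ℕ, β ≠ -(j : ℂ))
    (hγ : ∀ j : ℕ, γ ≠ -(j : ℂ)) (n : ℕ) : ((n:ℂ) + 2) * (γ + n + 1) * heunc k α β γ δ w (n+2) =
    ((k:ℂ)^2 * (α + n + 1) * (β + n + 1) + (n+1) * (γ + n) -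
      (w - (1 - (k : ℂ) ^ 2) * δ * (n + 1))) * heunc k α β γ δ w (n+1)
    - (k:ℂ)^2 * (α + n) * (β + n) * heunc k α β γ δ w n := by
  have h := heunA_succ α β γ hγ (n+1) (heung k α β γ δ w (n+2))
  have h1 := heunA_succ α β γ hγ n (heung k α β γ δ w n)
  have h0 := heung_rec k hk α β γ δ w hα hβ hγ n
  simp only [heunc_eq] at *
  push_cast at *
  linear_combination h - (k:ℂ)^2 * h1 + (poch α (n+1) * poch β (n+1) / (((n+1).factorial : ℂ) * poch γ (n+1))) * h0

lemma heunc_zero (k : ℝ) (α β γ δ w : ℂ) : heunc k α β γ δ w 0 = 1 := by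
  simp [heunc, poch, heunf]

end HeunComb

section HeunAnalysis
open Filter Topology

/-- subexponential growth -/
def SubExp (c : ℕ → ℂ) : Prop := ∀ r : ℝ, 1 < r → ∃ C : ℝ, ∀ n, ‖c n‖ ≤ C * r ^ n

lemma subExp_of_rec (c a b : ℕ → ℂ) (q : ℝ) (hq0 : 0 ≤ q) (hq1 : q < 1)
    (ha : Tendsto a atTop (𝓝 (1 + q))) (hb : Tendsto b atTop (𝓝 q))
    (hc : ∀ n, c (n+2) = a n * c (n+1) - b n * c n) : SubExp c := by
  intro r hr
  set t := (r - 1) / 2 with ht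
  have ht0 : 0 < t := by linarith
  set η := min t (t * (r - 1) / 2) with hη
  have hη0 : 0 < η := lt_min ht0 (by nlinarith)
  have hη1 : η ≤ t := min_le_left _ _
  have hη2 : η ≤ t * (r - 1) / 2 := min_le_right _ _
  have hA : ∀ᶠ n in atTop, ‖a n - (1 + q)‖ < η := by
    have := (tendsto_iff_norm_sub_tendsto_zero.1 ha)
    exact this.eventually (gt_mem_nhds hη0)
  have hB : ∀ᶠ n in atTop, ‖b n - q‖ < η := by
    have := (tendsto_iff_norm_sub_tendsto_zero.1 hb)
    exact this.eventually (gt_mem_nhds hη0)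
  obtain ⟨N, hN⟩ := eventually_atTop.1 (hA.and hB)
  set V : ℕ → ℝ := fun n => ‖c (n+1) - q * c n‖ + t * ‖c n‖ with hV
  have hV0 : ∀ n, 0 ≤ V n := fun n => by positivity
  have hstep : ∀ n ≥ N, V (n+1) ≤ r * V n := by
    intro n hn
    obtain ⟨h1, h2⟩ := hN n hn
    have e1 : ‖c (n+2) - q * c (n+1)‖ ≤ ‖c (n+1) - q * c n‖ + η * ‖c (n+1)‖ + η * ‖c n‖ := by
      have : c (n+2) - q * c (n+1) = (c (n+1) - q * c n) + (a n - (1 + q)) * c (n+1)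
          - (b n - q) * c n := by rw [hc]; ring
      rw [this]
      refine (norm_sub_le _ _).trans (add_le_add ((norm_add_le _ _).trans
        (add_le_add le_rfl ?_)) ?_)
      · rw [norm_mul]; gcongr
      · rw [norm_mul]; gcongr
    have e2 : ‖c (n+1)‖ ≤ ‖c (n+1) - q * c n‖ + q * ‖c n‖ := by
      have : c (n+1) = (c (n+1) - q * c n) + q * c n := by ring
      calc ‖c (n+1)‖ = ‖(c (n+1) - q * c n) + q * c n‖ := by rw [← this]
        _ ≤ _ := (norm_add_le _ _).trans (by
          rw [norm_mul]; simp [abs_of_nonneg hq0])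
    simp only [hV]
    have p1 := norm_nonneg (c (n+1) - q * c n)
    have p2 := norm_nonneg (c n)
    generalize ‖c (n+1) - q * c n‖ = D at *
    generalize ‖c n‖ = X at *
    generalize ‖c (n+1)‖ = Y at *
    have : (η + t) * Y ≤ (η + t) * (D + q * X) := by gcongr
    have s1 : (1 + η + t) * D ≤ r * D := by gcongr; linarith
    have s2 : (η * (1 + q) + t * q) * X ≤ (r * t) * X := by gcongr; nlinarith
    nlinarith
  have hbd : ∀ n, V (N + n) ≤ V N * r ^ n := by
    intro n
    induction n with
    | zero => simp
    | succ n ih =>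
      have := hstep (N + n) (by omega)
      rw [← add_assoc, pow_succ]
      nlinarith
  have r0 : (0:ℝ) < r := by linarith
  refine ⟨V N / t + ∑ i ∈ Finset.range N, ‖c i‖, fun n => ?_⟩
  have hs : 0 ≤ ∑ i ∈ Finset.range N, ‖c i‖ := Finset.sum_nonneg fun _ _ => norm_nonneg _
  have hv : 0 ≤ V N / t := div_nonneg (hV0 N) ht0.le
  by_cases hn : n < N
  · have h1 : ‖c n‖ ≤ ∑ i ∈ Finset.range N, ‖c i‖ :=
      Finset.single_le_sum (f := fun i => ‖c i‖) (fun _ _ => norm_nonneg _) (by simpa using hn)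
    have h2 : 1 ≤ r ^ n := one_le_pow₀ hr.le
    nlinarith
  · obtain ⟨i, rfl⟩ := Nat.exists_eq_add_of_le (not_lt.1 hn)
    have h1 : t * ‖c (N+i)‖ ≤ V (N+i) := by simp only [hV]; have := norm_nonneg (c (N+i+1) - q * c (N+i)); linarith
    have h2 : ‖c (N+i)‖ ≤ V N / t * r ^ i := by
      rw [div_mul_eq_mul_div, le_div_iff₀ ht0]; linarith [hbd i]
    have h3 : r ^ i ≤ r ^ (N+i) := pow_le_pow_right₀ hr.le (by omega)
    have h4 : 0 < r ^ (N+i) := by positivity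
    calc _ ≤ V N / t * r ^ i := h2
      _ ≤ V N / t * r ^ (N+i) := by gcongr
      _ ≤ _ := by nlinarith

lemma SubExp.shift {c : ℕ → ℂ} (h : SubExp c) : SubExp fun n => ((n:ℂ) + 1) * c (n+1) := by
  intro r hr
  obtain ⟨s, hs1, hsr⟩ := exists_between hr
  obtain ⟨C, hC⟩ := h s hs1
  have s0 : 0 < s := by linarith
  have r0 : 0 < r := by linarith
  have hsum : Summable fun n : ℕ => ((n:ℝ))^1 * (s / r) ^ n := by
    refine summable_pow_mul_geometric_of_norm_lt_one 1 ?_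
    rw [Real.norm_of_nonneg (by positivity), div_lt_one r0]; exact hsr
  obtain ⟨B, hB⟩ := hsum.tendsto_atTop_zero.bddAbove_range
  have hC0 : 0 ≤ C := by simpa using (norm_nonneg _).trans (hC 0)
  refine ⟨C * B * r, fun n => ?_⟩
  have h1 := hB ⟨n+1, rfl⟩
  simp only [pow_one, div_pow] at h1
  rw [mul_div_assoc', div_le_iff₀ (by positivity)] at h1
  rw [norm_mul]
  have h2 : ‖(n:ℂ) + 1‖ = ((n+1 : ℕ) : ℝ) := by
    have : (n:ℂ) + 1 = ((n+1 : ℕ) : ℂ) := by push_cast; ring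
    rw [this, Complex.norm_natCast]
  rw [h2]
  calc ((n+1 : ℕ) : ℝ) * ‖c (n+1)‖ ≤ ((n+1 : ℕ) : ℝ) * (C * s ^ (n+1)) := by
        gcongr; exact hC _
    _ = C * (((n+1 : ℕ) : ℝ) * s ^ (n+1)) := by ring
    _ ≤ C * (B * r ^ (n+1)) := by gcongr
    _ = _ := by ring

lemma SubExp.summable_bound {c : ℕ → ℂ} (h : SubExp c) {ρ : ℝ} (h0 : 0 ≤ ρ) (h1 : ρ < 1) :
    Summable fun n => ‖c n‖ * ρ ^ n := by
  obtain ⟨r, hr, hr2⟩ : ∃ r : ℝ, 1 < r ∧ r * ρ < 1 := by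
    rcases h0.eq_or_lt with rfl | h0
    · exact ⟨2, by norm_num, by simp⟩
    · obtain ⟨r, a, b⟩ := exists_between ((one_lt_div h0).2 h1)
      exact ⟨r, a, by rwa [lt_div_iff₀ h0] at b⟩
  obtain ⟨C, hC⟩ := h r hr
  refine Summable.of_nonneg_of_le (fun n => by positivity) (fun n => ?_)
    ((summable_geometric_of_lt_one (r := r * ρ) (by positivity) hr2).mul_left C)
  rw [mul_pow, ← mul_assoc]
  gcongr
  exact hC n

lemma SubExp.summable {c : ℕ → ℂ} (h : SubExp c) {z : ℂ} (hz : ‖z‖ < 1) :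
    Summable fun n => c n * z ^ n := by
  refine Summable.of_norm ?_
  simpa [norm_mul, norm_pow] using h.summable_bound (norm_nonneg z) hz

lemma SubExp.hasDerivAt {c : ℕ → ℂ} (h : SubExp c) {z : ℂ} (hz : ‖z‖ < 1) :
    HasDerivAt (fun z => ∑' n, c n * z ^ n) (∑' n : ℕ, (((n:ℂ) + 1) * c (n+1)) * z ^ n) z := by
  obtain ⟨ρ, h1, h2⟩ := exists_between hz
  have hρ : 0 ≤ ρ := (norm_nonneg z).trans h1.le
  have key := hasDerivAt_tsum_of_isPreconnected (𝕜 := ℂ) (F := ℂ)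
    (g := fun n z => c n * z ^ n) (g' := fun n z => c n * (n * z ^ (n-1)))
    (u := fun n => ‖c n * n‖ * ρ ^ (n-1)) (t := Metric.ball (0:ℂ) ρ) (y₀ := z) (y := z) ?_
    Metric.isOpen_ball (convex_ball _ _).isPreconnected ?_ ?_ (by simpa using h1)
    (h.summable hz) (by simpa using h1)
  · have hs : Summable fun n : ℕ => c n * (n * z ^ (n-1)) := by
      rw [← summable_nat_add_iff 1]
      refine (h.shift.summable hz).congr fun n => ?_
      rw [Nat.add_sub_cancel]; push_cast; ring
    have e : ∑' n : ℕ, (((n:ℂ) + 1) * c (n+1)) * z ^ n = ∑' n : ℕ, c n * (n * z ^ (n-1)) := by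
      rw [hs.tsum_eq_zero_add]
      simp only [Nat.cast_zero, zero_mul, mul_zero, zero_add]
      refine tsum_congr fun n => ?_
      rw [Nat.add_sub_cancel]; push_cast; ring
    rw [e]; exact key
  · rw [← summable_nat_add_iff 1]
    refine (h.shift.summable_bound hρ h2).congr fun n => ?_
    push_cast; simp [mul_comm]
  · intro n y _
    exact (hasDerivAt_pow n y).const_mul (c n)
  · intro n y hy
    have : ‖y‖ ≤ ρ := by simpa using (Metric.mem_ball.1 hy).le
    rw [← mul_assoc, norm_mul _ (y ^ _), norm_pow]
    gcongr

lemma hasSum_shift {a b : ℕ → ℂ} {z S : ℂ} (h : HasSum (fun n => a n * z ^ n) S)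
    (b0 : b 0 = 0) (hb : ∀ n, b (n+1) = a n) : HasSum (fun n => b n * z ^ n) (z * S) := by
  rw [← hasSum_nat_add_iff' 1]
  simp only [Finset.sum_range_one, b0, zero_mul, sub_zero]
  have e : (fun n => b (n+1) * z ^ (n+1)) = fun n => z * (a n * z ^ n) := by
    funext n; rw [hb]; ring
  rw [e]
  exact h.mul_left z

lemma tendsto_ratio (x y : ℂ) (s : ℂ) : Tendsto (fun n : ℕ => (s * n + x) / ((n:ℂ) + y)) atTop (𝓝 s) := by
  have hinv : Tendsto (fun n : ℕ => ((n:ℂ))⁻¹) atTop (𝓝 0) := tendsto_inv_atTop_nhds_zero_nat (𝕜 := ℂ)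
  have h1 : Tendsto (fun n : ℕ => (s + x * ((n:ℂ))⁻¹) / (1 + y * ((n:ℂ))⁻¹)) atTop
      (𝓝 ((s + x * 0) / (1 + y * 0))) :=
    (tendsto_const_nhds.add (hinv.const_mul x)).div (tendsto_const_nhds.add (hinv.const_mul y))
      (by simp)
  simp only [mul_zero, add_zero, div_one] at h1
  refine h1.congr' ?_
  filter_upwards [eventually_gt_atTop 0] with n hn
  have : (n:ℂ) ≠ 0 := by exact_mod_cast hn.ne'
  rw [← mul_div_mul_left _ _ this]
  congr 1 <;> field_simp

end HeunAnalysis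

lemma heunc_subExp (k : ℝ) (hk0 : 0 < k) (hk1 : k < 1) (α β γ δ w : ℂ)
    (hα : ∀ j : ℕ, α ≠ -(j : ℂ)) (hβ : ∀ j : ℕ, β ≠ -(j : ℂ))
    (hγ : ∀ j : ℕ, γ ≠ -(j : ℂ)) : SubExp (heunc k α β γ δ w) := by
  have tr := tendsto_ratio
  have hinv : Filter.Tendsto (fun n : ℕ => 1 / ((n:ℂ) + (γ + 1))) Filter.atTop (nhds 0) := by
    have := tr 1 (γ+1) 0
    simpa using this
  refine subExp_of_rec _
    (fun n => ((k:ℂ)^2 * (α + n + 1) * (β + n + 1) + (n+1) * (γ + n) -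
      (w - (1 - (k : ℂ) ^ 2) * δ * (n + 1))) / (((n:ℂ) + 2) * (γ + n + 1)))
    (fun n => ((k:ℂ)^2 * (α + n) * (β + n)) / (((n:ℂ) + 2) * (γ + n + 1)))
    (k^2) (by positivity) (by nlinarith) ?_ ?_ ?_
  · have h := (((((tr (α + 1) 2 1).mul (tr (β + 1) (γ + 1) 1)).const_mul ((k:ℂ)^2)).add
      ((tr 1 2 1).mul (tr γ (γ + 1) 1))).sub
      ((tr (w - (1 - (k : ℂ) ^ 2) * δ) 2 (-((1 - (k : ℂ) ^ 2) * δ))).mul hinv))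
    have e : (k:ℂ)^2 * (1 * 1) + 1 * 1 - -((1 - (k : ℂ) ^ 2) * δ) * 0 = 1 + ((k^2 : ℝ) : ℂ) := by
      push_cast; ring
    rw [e] at h
    refine h.congr fun n => ?_
    have h1 : (n:ℂ) + 2 ≠ 0 := by exact_mod_cast (by omega : n + 2 ≠ 0)
    have h2 : (n:ℂ) + (γ + 1) ≠ 0 := by
      have := add_ne_of hγ (n+1)
      push_cast at this
      intro h; apply this; linear_combination h
    have h3 : γ + n + 1 = (n:ℂ) + (γ + 1) := by ring
    rw [h3]
    field_simp
    ring
  · have h := ((tr α 2 1).mul (tr β (γ + 1) 1)).const_mul ((k:ℂ)^2)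
    have e : (k:ℂ)^2 * (1 * 1) = ((k^2 : ℝ) : ℂ) := by push_cast; ring
    rw [e] at h
    refine h.congr fun n => ?_
    have h1 : (n:ℂ) + 2 ≠ 0 := by exact_mod_cast (by omega : n + 2 ≠ 0)
    have h2 : (n:ℂ) + (γ + 1) ≠ 0 := by
      have := add_ne_of hγ (n+1)
      push_cast at this
      intro h; apply this; linear_combination h
    have h3 : γ + n + 1 = (n:ℂ) + (γ + 1) := by ring
    rw [h3]
    field_simp
    ring
  · intro n
    have h1 : (n:ℂ) + 2 ≠ 0 := by exact_mod_cast (by omega : n + 2 ≠ 0)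
    have h2 : γ + n + 1 ≠ 0 := by
      have := add_ne_of hγ (n+1)
      push_cast at this
      rwa [← add_assoc] at this
    have := heunc_rec k hk0 α β γ δ w hα hβ hγ n
    rw [div_mul_eq_mul_div, div_mul_eq_mul_div, ← sub_div, eq_div_iff (mul_ne_zero h1 h2), ← this]
    ring

lemma hasSum_congr_fun {f g : ℕ → ℂ} {S : ℂ} (h : HasSum f S) (e : ∀ n, g n = f n) :
    HasSum g S := by
  rw [funext e]; exact h

/-- The power series `F(z) = Σ c_n zⁿ` converges in the open unit disk, takes the
value `1` at `0`, and satisfies Heun's differential equation (with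
`ε = α + β + 1 - γ - δ`) on the punctured disk. -/
theorem heun_series_solves_heun_equation (k : ℝ) (hk0 : 0 < k) (hk1 : k < 1)
    (α β γ δ w : ℂ)
    (hα : ∀ j : ℕ, α ≠ -(j : ℂ)) (hβ : ∀ j : ℕ, β ≠ -(j : ℂ))
    (hγ : ∀ j : ℕ, γ ≠ -(j : ℂ))
    (F : ℂ → ℂ) (hF : ∀ z : ℂ, F z = ∑' n : ℕ, heunc k α β γ δ w n * z ^ n) :
    (∀ z : ℂ, ‖z‖ < 1 → Summable fun n : ℕ => heunc k α β γ δ w n * z ^ n) ∧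
    F 0 = 1 ∧
    ∀ z : ℂ, 0 < ‖z‖ → ‖z‖ < 1 →
      deriv (deriv F) z +
        (γ / z - δ / (1 - z) -
            (α + β + 1 - γ - δ) * (k : ℂ) ^ 2 / (1 - (k : ℂ) ^ 2 * z)) * deriv F z +
        (w - (k : ℂ) ^ 2 * α * β * (1 - z)) /
            (z * (1 - z) * (1 - (k : ℂ) ^ 2 * z)) * F z = 0 := by
  have hS := heunc_subExp k hk0 hk1 α β γ δ w hα hβ hγ
  have hrec0 := heunc_rec0 k hk0 α β γ δ w hα hβ hγ
  have hrec := heunc_rec k hk0 α β γ δ w hα hβ hγ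
  have hc0 := heunc_zero k α β γ δ w
  obtain rfl : F = fun z => ∑' n : ℕ, heunc k α β γ δ w n * z ^ n := funext hF
  clear hF
  generalize heunc k α β γ δ w = c at *
  refine ⟨fun z hz => hS.summable hz, ?_, ?_⟩
  · show ∑' n : ℕ, c n * (0:ℂ) ^ n = 1
    rw [tsum_eq_single 0 (by intro n hn; simp [hn])]
    simp [hc0]
  intro z hz0 hz1
  have hz : z ≠ 0 := norm_pos_iff.1 hz0
  have hd1 : ∀ y : ℂ, ‖y‖ < 1 → deriv (fun z => ∑' n : ℕ, c n * z ^ n) y =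
      ∑' n : ℕ, (((n:ℂ) + 1) * c (n+1)) * y ^ n := fun y hy => (hS.hasDerivAt hy).deriv
  have hd2 : deriv (deriv (fun z => ∑' n : ℕ, c n * z ^ n)) z =
      ∑' n : ℕ, (((n:ℂ) + 1) * (((n + 1 : ℕ) : ℂ) + 1) * c (n+1+1)) * z ^ n := by
    have hev : deriv (fun z => ∑' n : ℕ, c n * z ^ n) =ᶠ[nhds z]
        fun y => ∑' n : ℕ, (((n:ℂ) + 1) * c (n+1)) * y ^ n := by
      have : Metric.ball (0:ℂ) 1 ∈ nhds z := Metric.isOpen_ball.mem_nhds (by simpa using hz1)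
      filter_upwards [this] with y hy
      exact hd1 y (by simpa using hy)
    rw [hev.deriv_eq, (hS.shift.hasDerivAt hz1).deriv]
    refine tsum_congr fun n => ?_
    ring
  have s0 := (hS.summable hz1).hasSum
  have s1 := (hS.shift.summable hz1).hasSum
  have s2 : HasSum (fun n : ℕ => (((n:ℂ) + 1) * (((n + 1 : ℕ) : ℂ) + 1) * c (n+1+1)) * z ^ n)
      (∑' n : ℕ, (((n:ℂ) + 1) * (((n + 1 : ℕ) : ℂ) + 1) * c (n+1+1)) * z ^ n) := by
    refine Summable.hasSum ((hS.shift.shift.summable hz1).congr fun n => ?_)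
    ring
  rw [hd2, hd1 z hz1]
  show _ + _ * (∑' n : ℕ, c n * z ^ n) = 0
  set F0 := ∑' n : ℕ, c n * z ^ n
  set F1 := ∑' n : ℕ, (((n:ℂ) + 1) * c (n+1)) * z ^ n
  set F2 := ∑' n : ℕ, (((n:ℂ) + 1) * (((n + 1 : ℕ) : ℂ) + 1) * c (n+1+1)) * z ^ n
  have t1 : HasSum (fun n : ℕ => ((n:ℂ) * c n) * z ^ n) (z * F1) :=
    hasSum_shift s1 (by simp) (fun n => by push_cast; ring)
  have t2 : HasSum (fun n : ℕ => ((n:ℂ) * ((n:ℂ) + 1) * c (n+1)) * z ^ n) (z * F2) :=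
    hasSum_shift s2 (by simp) (fun n => by push_cast; ring)
  have t3 : HasSum (fun n : ℕ => (((n:ℂ) - 1) * (n:ℂ) * c n) * z ^ n) (z * (z * F2)) :=
    hasSum_shift t2 (by simp) (fun n => by push_cast; ring)
  have hu : HasSum (fun n : ℕ => (-(k:ℂ)^2 * (α + n) * (β + n) * c n) * z ^ n)
      (-(k:ℂ)^2 * (z * (z * F2) + (α + β + 1) * (z * F1) + α * β * F0)) := by
    have h := ((t3.add (t1.mul_left (α + β + 1))).add (s0.mul_left (α * β))).mul_left (-(k:ℂ)^2)
    refine hasSum_congr_fun h fun n => ?_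
    ring
  have he := hasSum_shift hu (b := fun n : ℕ => ((n:ℂ) + 1) * (γ + n) * c (n+1) -
      ((k:ℂ)^2 * (α + n) * (β + n) + n * (γ + n - 1) - (w - (1 - (k : ℂ) ^ 2) * δ * n)) * c n)
    (by
      simp only [Nat.cast_zero, zero_add, add_zero, mul_zero, sub_zero, zero_mul, one_mul]
      linear_combination hrec0)
    (fun n => by
      have := hrec n
      push_cast
      linear_combination this)
  have he2 : HasSum (fun n : ℕ => (((n:ℂ) + 1) * (γ + n) * c (n+1) -
      ((k:ℂ)^2 * (α + n) * (β + n) + n * (γ + n - 1) - (w - (1 - (k : ℂ) ^ 2) * δ * n)) * c n) * z ^ n)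
      (z * F2 + γ * F1 - ((k:ℂ)^2 * (z * (z * F2) + (α + β + 1) * (z * F1) + α * β * F0)
        + (z * (z * F2) + γ * (z * F1)) - w * F0 + (1 - (k : ℂ) ^ 2) * δ * (z * F1))) := by
    have h := (t2.add (s1.mul_left γ)).sub
      ((((((t3.add (t1.mul_left (α + β + 1))).add (s0.mul_left (α * β))).mul_left ((k:ℂ)^2)).add
        (t3.add (t1.mul_left γ))).sub (s0.mul_left w)).add
        (t1.mul_left ((1 - (k : ℂ) ^ 2) * δ)))
    refine hasSum_congr_fun h fun n => ?_
    ring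
  have key := he.unique he2
  have n1 : 1 - z ≠ 0 := by
    intro h
    have : z = 1 := by linear_combination -h
    rw [this] at hz1; simp at hz1
  have n2 : 1 - (k:ℂ)^2 * z ≠ 0 := by
    intro h
    have h1 : (k:ℂ)^2 * z = 1 := by linear_combination -h
    have h2 : ‖(k:ℂ)^2 * z‖ = 1 := by rw [h1]; simp
    rw [norm_mul, norm_pow, Complex.norm_real, Real.norm_of_nonneg hk0.le] at h2
    have : k^2 < 1 := by nlinarith
    nlinarith
  have n3 : 1 - z * (k:ℂ)^2 ≠ 0 := by rwa [mul_comm]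
  field_simp
  linear_combination -key
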